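/- Let n ≥ 1 be an integer, Ω ⊂ ℝⁿ a bounded open set, T > 0, x₀ ∈ ℝⁿ \ cl(Ω), β ∈ (0,1), and C₀ > 0 such that ψ ≥ 1 on Ω × (−T,T), where ψ(x,t) = |x−x₀|² − βt² + C₀; for λ > 0 set φ = e^{λψ}. Let α ∈ (2β/(β+n), 2/(β+n)) and define, for s, λ > 0, P₁w = ∂ₜ²w − Δw + s²λ²φ²(|∂ₜψ|² − |∇ψ|²)w and P₂w = (α−1)sλφ(∂ₜ²ψ − Δψ)w − sλ²φ(|∂ₜψ|² − |∇ψ|²)w − 2sλφ(∂ₜw ∂ₜψ − ∇w·∇ψ). Then there exist λ₀ > 0, κ > 0 and M > 0 such that for all λ ≥ λ₀, all s > 0, and every smooth function w with compact support contained in Ω × (−T,T): ∫∫_{Ω×(−T,T)} P₁w · P₂w dx dt ≥ κ ( sλ ∫∫ φ (|∂ₜw|² + |∇w|²) dx dt + s³λ³ ∫∫ φ³ |w|² dx dt ) − M sλ⁴ ∫∫ φ |w|² dx dt. -/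

import Mathlib

open MeasureTheory Real Set
open scoped RealInnerProductSpace

/-- The Laplacian of a real-valued function on Euclidean space. -/
noncomputable def lap {n : ℕ} (f : EuclideanSpace ℝ (Fin n) → ℝ) (x : EuclideanSpace ℝ (Fin n)) : ℝ :=
  ∑ i : Fin n, fderiv ℝ (fun y => fderiv ℝ f y (EuclideanSpace.single i 1)) x (EuclideanSpace.single i 1)

/-- The weight `ψ(x,t) = |x - x₀|² - β t² + C₀`. -/
noncomputable def psi {n : ℕ} (x₀ : EuclideanSpace ℝ (Fin n)) (β C₀ : ℝ)
    (x : EuclideanSpace ℝ (Fin n)) (t : ℝ) : ℝ :=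
  ‖x - x₀‖ ^ 2 - β * t ^ 2 + C₀

/-- The Carleman weight `φ = e^{λψ}`. -/
noncomputable def phi {n : ℕ} (x₀ : EuclideanSpace ℝ (Fin n)) (β C₀ l : ℝ)
    (x : EuclideanSpace ℝ (Fin n)) (t : ℝ) : ℝ :=
  Real.exp (l * psi x₀ β C₀ x t)


/-- The operator `P₁w = ∂ₜ²w - Δw + s²λ²φ²(|∂ₜψ|² - |∇ψ|²)w` (formula (2.2)). -/
noncomputable def P1 {n : ℕ} (x₀ : EuclideanSpace ℝ (Fin n)) (β C₀ s l : ℝ)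
    (w : EuclideanSpace ℝ (Fin n) → ℝ → ℝ) (x : EuclideanSpace ℝ (Fin n)) (t : ℝ) : ℝ :=
  deriv (deriv (w x)) t - lap (fun y => w y t) x
    + s ^ 2 * l ^ 2 * (phi x₀ β C₀ l x t) ^ 2 *
      ((deriv (psi x₀ β C₀ x) t) ^ 2 - ‖gradient (fun y => psi x₀ β C₀ y t) x‖ ^ 2) * w x t

/-- The operator
`P₂w = (α-1)sλφ(∂ₜ²ψ - Δψ)w - sλ²φ(|∂ₜψ|² - |∇ψ|²)w - 2sλφ(∂ₜw ∂ₜψ - ∇w·∇ψ)` (formula (2.4)). -/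
noncomputable def P2 {n : ℕ} (x₀ : EuclideanSpace ℝ (Fin n)) (β C₀ s l α : ℝ)
    (w : EuclideanSpace ℝ (Fin n) → ℝ → ℝ) (x : EuclideanSpace ℝ (Fin n)) (t : ℝ) : ℝ :=
  (α - 1) * s * l * phi x₀ β C₀ l x t *
      (deriv (deriv (psi x₀ β C₀ x)) t - lap (fun y => psi x₀ β C₀ y t) x) * w x t
    - s * l ^ 2 * phi x₀ β C₀ l x t *
      ((deriv (psi x₀ β C₀ x) t) ^ 2 - ‖gradient (fun y => psi x₀ β C₀ y t) x‖ ^ 2) * w x t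
    - 2 * s * l * phi x₀ β C₀ l x t *
      (deriv (w x) t * deriv (psi x₀ β C₀ x) t
        - ⟪gradient (fun y => w y t) x, gradient (fun y => psi x₀ β C₀ y t) x⟫)

section core
set_option linter.unusedSectionVars false
variable {V : Type*} [NormedAddCommGroup V] [NormedSpace ℝ V]

/-- directional derivative -/
noncomputable def dd (v : V) (f : V → ℝ) (q : V) : ℝ := fderiv ℝ f q v

/-- smoothness -/
def Sm (f : V → ℝ) : Prop := ContDiff ℝ (⊤ : ℕ∞) f

lemma Sm.dd {f : V → ℝ} (hf : Sm f) (v : V) : Sm (dd v f) := by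
  have : ContDiff ℝ (⊤ : ℕ∞) (fun q => fderiv ℝ f q v) :=
    (ContDiff.fderiv_right (m := (⊤ : ℕ∞)) hf (by simp)).clm_apply contDiff_const
  exact this

lemma Sm.hasD {f : V → ℝ} (hf : Sm f) (v q : V) :
    HasDerivAt (fun τ : ℝ => f (q + τ • v)) (_root_.dd v f q) 0 := by
  have h : DifferentiableAt ℝ f q := (hf.differentiable (by simp)) q
  exact h.hasFDerivAt.hasLineDerivAt v

lemma dd_eq {f : V → ℝ} (hf : Sm f) {v q : V} {a : ℝ}
    (h : HasDerivAt (fun τ : ℝ => f (q + τ • v)) a 0) : dd v f q = a :=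
  (hf.hasD v q).unique h

lemma Sm.continuous {f : V → ℝ} (hf : Sm f) : Continuous f := ContDiff.continuous hf
lemma Sm.mul {f g : V → ℝ} (hf : Sm f) (hg : Sm g) : Sm (fun q => f q * g q) := ContDiff.mul hf hg
lemma Sm.add {f g : V → ℝ} (hf : Sm f) (hg : Sm g) : Sm (fun q => f q + g q) := ContDiff.add hf hg
lemma Sm.sub {f g : V → ℝ} (hf : Sm f) (hg : Sm g) : Sm (fun q => f q - g q) := ContDiff.sub hf hg
lemma Sm.pow {f : V → ℝ} (hf : Sm f) (k : ℕ) : Sm (fun q => f q ^ k) := ContDiff.pow hf k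
lemma Sm.const (a : ℝ) : Sm (fun _ : V => a) := contDiff_const
lemma Sm.cmul {f : V → ℝ} (a : ℝ) (hf : Sm f) : Sm (fun q => a * f q) := (Sm.const a).mul hf
lemma Sm.exp {f : V → ℝ} (hf : Sm f) : Sm (fun q => Real.exp (f q)) := ContDiff.exp hf
lemma Sm.sum {ι : Type*} [Fintype ι] {f : ι → V → ℝ} (hf : ∀ i, Sm (f i)) :
    Sm (fun q => ∑ i, f i q) := ContDiff.sum (fun i _ => hf i)

lemma dd_symm {f : V → ℝ} (hf : Sm f) (u v q : V) : dd u (dd v f) q = dd v (dd u f) q := by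
  have h : IsSymmSndFDerivAt ℝ f q := by
    apply ContDiffAt.isSymmSndFDerivAt (n := (⊤ : ℕ∞)) (ContDiff.contDiffAt hf)
    simp only [minSmoothness_of_isRCLikeNormedField]
    exact WithTop.coe_le_coe.2 (show (2 : ℕ∞) ≤ ⊤ from le_top)
  have key : ∀ a b : V, dd a (dd b f) q = fderiv ℝ (fderiv ℝ f) q a b := by
    intro a b
    have h1 : DifferentiableAt ℝ (fderiv ℝ f) q :=
      (ContDiff.fderiv_right (m := (⊤ : ℕ∞)) hf (by simp)).differentiable (by simp) q
    unfold dd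
    rw [fderiv_clm_apply h1 (differentiableAt_const _)]
    simp
  rw [key, key, h.eq]

lemma dd_zero {f : V → ℝ} {K : Set V} (hK : IsClosed K) (h : ∀ q ∉ K, f q = 0) (v : V) :
    ∀ q ∉ K, dd v f q = 0 := by
  intro q hq
  have : f =ᶠ[nhds q] fun _ => 0 := by
    filter_upwards [hK.isOpen_compl.mem_nhds hq] with y hy using h y hy
  unfold dd
  rw [this.fderiv_eq]; simp

variable [FiniteDimensional ℝ V] [MeasurableSpace V] [BorelSpace V] (μ : Measure V) [μ.IsAddHaarMeasure]

lemma integrable_of_K {f : V → ℝ} {K : Set V} (hK : IsCompact K) (hf : Continuous f)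
    (h : ∀ q ∉ K, f q = 0) : Integrable f μ :=
  hf.integrable_of_hasCompactSupport (HasCompactSupport.intro hK h)

lemma integral_dd {f : V → ℝ} {K : Set V} (hK : IsCompact K) (hf : Sm f)
    (h : ∀ q ∉ K, f q = 0) (v : V) : ∫ q, dd v f q ∂μ = 0 := by
  have hc : HasCompactSupport f := HasCompactSupport.intro hK h
  have := integral_mul_fderiv_eq_neg_fderiv_mul_of_integrable (μ := μ) (f := fun _ : V => (1:ℝ)) (g := f) (v := v)
    (by simp) (by simp only [one_mul]; exact integrable_of_K μ hK (hf.dd v).continuous (dd_zero hK.isClosed h v)) (by simpa using integrable_of_K μ hK hf.continuous h)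
    (by fun_prop) (fun x _ => (ContDiff.differentiable hf (by simp)) x)
  simpa [dd] using this

lemma integral_div {ι : Type*} [Fintype ι] (e : ι → V) {F : ι → V → ℝ} {K : Set V} (hK : IsCompact K)
    (hF : ∀ i, Sm (F i)) (h : ∀ i, ∀ q ∉ K, F i q = 0) : ∫ q, ∑ i, dd (e i) (F i) q ∂μ = 0 := by
  rw [integral_finsetSum]
  · exact Finset.sum_eq_zero fun i _ => integral_dd μ hK (hF i) (h i) _
  · intro i _
    exact integrable_of_K μ hK ((hF i).dd _).continuous (dd_zero hK.isClosed (h i) _)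
end core
section ident
set_option linter.unusedSectionVars false
set_option linter.unusedVariables false
variable {V : Type*} [NormedAddCommGroup V] [NormedSpace ℝ V]
  {ι : Type*} [Fintype ι] [DecidableEq ι]

/-- the signed bracket of two gradients -/
noncomputable def br (e : ι → V) (ε : ι → ℝ) (f g : V → ℝ) (q : V) : ℝ :=
  ∑ i, ε i * (dd (e i) f q * dd (e i) g q)

/-- the wave operator -/
noncomputable def bx (e : ι → V) (ε : ι → ℝ) (f : V → ℝ) (q : V) : ℝ :=
  ∑ i, ε i * dd (e i) (dd (e i) f) q

lemma Sm.br (e : ι → V) (ε : ι → ℝ) {f g : V → ℝ} (hf : Sm f) (hg : Sm g) : Sm (br e ε f g) :=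
  Sm.sum fun i => ((hf.dd _).mul (hg.dd _)).cmul _

lemma Sm.bx (e : ι → V) (ε : ι → ℝ) {f : V → ℝ} (hf : Sm f) : Sm (bx e ε f) :=
  Sm.sum fun i => ((hf.dd _).dd _).cmul _

lemma dd_mul {f g : V → ℝ} (hf : Sm f) (hg : Sm g) (v q : V) :
    dd v (fun q => f q * g q) q = dd v f q * g q + f q * dd v g q := by
  apply dd_eq (hf.mul hg)
  simpa using (hf.hasD v q).fun_mul (hg.hasD v q)

lemma dd_add {f g : V → ℝ} (hf : Sm f) (hg : Sm g) (v q : V) :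
    dd v (fun q => f q + g q) q = dd v f q + dd v g q := by
  apply dd_eq (hf.add hg)
  exact (hf.hasD v q).add (hg.hasD v q)

lemma dd_sub {f g : V → ℝ} (hf : Sm f) (hg : Sm g) (v q : V) :
    dd v (fun q => f q - g q) q = dd v f q - dd v g q := by
  apply dd_eq (hf.sub hg)
  exact (hf.hasD v q).sub (hg.hasD v q)

lemma dd_cmul {f : V → ℝ} (a : ℝ) (hf : Sm f) (v q : V) :
    dd v (fun q => a * f q) q = a * dd v f q := by
  apply dd_eq (hf.cmul a)
  exact (hf.hasD v q).const_mul a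

lemma dd_sq {f : V → ℝ} (hf : Sm f) (v q : V) :
    dd v (fun q => f q ^ 2) q = 2 * f q * dd v f q := by
  apply dd_eq (hf.pow 2)
  simpa using (hf.hasD v q).fun_pow 2

lemma dd_cube {f : V → ℝ} (hf : Sm f) (v q : V) :
    dd v (fun q => f q ^ 3) q = 3 * f q ^ 2 * dd v f q := by
  apply dd_eq (hf.pow 3)
  simpa using (hf.hasD v q).fun_pow 3

lemma dd_exp {f : V → ℝ} (hf : Sm f) (v q : V) :
    dd v (fun q => Real.exp (f q)) q = Real.exp (f q) * dd v f q := by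
  apply dd_eq hf.exp
  simpa using (hf.hasD v q).exp

lemma dd_sum {f : ι → V → ℝ} (hf : ∀ i, Sm (f i)) (v q : V) :
    dd v (fun q => ∑ i, f i q) q = ∑ i, dd v (f i) q := by
  apply dd_eq (Sm.sum hf)
  exact HasDerivAt.fun_sum fun i _ => (hf i).hasD v q

lemma dd_br (e : ι → V) (ε : ι → ℝ) {f g : V → ℝ} (hf : Sm f) (hg : Sm g) (v q : V) :
    dd v (br e ε f g) q = ∑ i, ε i * (dd v (dd (e i) f) q * dd (e i) g q
      + dd (e i) f q * dd v (dd (e i) g) q) := by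
  unfold br
  rw [dd_sum (fun i => ((hf.dd _).mul (hg.dd _)).cmul _)]
  refine Finset.sum_congr rfl fun i _ => ?_
  rw [dd_cmul _ ((hf.dd _).mul (hg.dd _)), dd_mul (hf.dd _) (hg.dd _)]

lemma div1 (e : ι → V) (ε : ι → ℝ) {g w : V → ℝ} (hg : Sm g) (hw : Sm w) (q : V) :
    ∑ i, dd (e i) (fun q => ε i * (g q * (w q * dd (e i) w q) - 1/2 * (dd (e i) g q * w q ^ 2))) q
      = g q * w q * bx e ε w q + g q * br e ε w w q - 1/2 * bx e ε g q * w q ^ 2 := by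
  unfold bx br
  simp only [Finset.mul_sum, Finset.sum_mul, ← Finset.sum_add_distrib, ← Finset.sum_sub_distrib]
  refine Finset.sum_congr rfl fun i _ => ?_
  have h1 := hw.dd (e i)
  have h2 := hg.dd (e i)
  rw [dd_cmul _ ((hg.mul (hw.mul h1)).sub ((h2.mul (hw.pow 2)).cmul _)),
    dd_sub (hg.mul (hw.mul h1)) ((h2.mul (hw.pow 2)).cmul _), dd_cmul _ (h2.mul (hw.pow 2)),
    dd_mul hg (hw.mul h1), dd_mul hw h1, dd_mul h2 (hw.pow 2), dd_sq hw]
  ring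

variable (e : ι → V) (ε c : ι → ℝ) {Ψ : V → ℝ}

lemma div2 (hε : ∀ i, ε i ^ 2 = 1)
    (hΨs : Sm Ψ) (hΨ : ∀ i j q, dd (e j) (dd (e i) Ψ) q = if i = j then c i else 0)
    {g w : V → ℝ} (hg : Sm g) (hw : Sm w) (q : V) :
    ∑ i, dd (e i) (fun q => ε i * (g q * (br e ε w Ψ q * dd (e i) w q))) q
      = g q * br e ε w Ψ q * bx e ε w q + br e ε g w q * br e ε w Ψ q
        + g q * (∑ i, ∑ j, ε i * ε j * dd (e i) w q * dd (e j) Ψ q * dd (e i) (dd (e j) w) q)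
        + g q * ∑ i, c i * dd (e i) w q ^ 2 := by
  have hb := hw.br e ε hΨs
  have key : ∀ i, dd (e i) (fun q => ε i * (g q * (br e ε w Ψ q * dd (e i) w q))) q
      = g q * br e ε w Ψ q * (ε i * dd (e i) (dd (e i) w) q)
        + (ε i * (dd (e i) g q * dd (e i) w q)) * br e ε w Ψ q
        + g q * (∑ j, ε i * ε j * dd (e i) w q * dd (e j) Ψ q * dd (e i) (dd (e j) w) q)
        + g q * (c i * dd (e i) w q ^ 2) := by
    intro i
    have h1 := hw.dd (e i)
    rw [dd_cmul _ (hg.mul (hb.mul h1)), dd_mul hg (hb.mul h1), dd_mul hb h1, dd_br e ε hw hΨs]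
    simp only [hΨ, mul_add, Finset.sum_add_distrib, mul_ite, mul_zero, Finset.sum_ite_eq',
      Finset.mem_univ, if_true]
    have : ∑ j, ε i * ε j * dd (e i) w q * dd (e j) Ψ q * dd (e i) (dd (e j) w) q
        = ε i * dd (e i) w q * ∑ j, ε j * (dd (e i) (dd (e j) w) q * dd (e j) Ψ q) := by
      rw [Finset.mul_sum]; exact Finset.sum_congr rfl fun j _ => by ring
    rw [this]
    linear_combination (g q * c i * dd (e i) w q ^ 2) * hε i
  simp only [key, Finset.sum_add_distrib, ← Finset.mul_sum, ← Finset.sum_mul]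
  rfl

lemma div3 (hΨs : Sm Ψ) (hΨ : ∀ i j q, dd (e j) (dd (e i) Ψ) q = if i = j then c i else 0)
    {g w : V → ℝ} (hg : Sm g) (hw : Sm w) (q : V) :
    ∑ i, dd (e i) (fun q => ε i * (g q * (br e ε w w q * dd (e i) Ψ q))) q
      = br e ε g Ψ q * br e ε w w q + g q * br e ε w w q * (∑ i, ε i * c i)
        + 2 * (g q * (∑ i, ∑ j, ε i * ε j * dd (e i) w q * dd (e j) Ψ q * dd (e i) (dd (e j) w) q)) := by
  have hb := hw.br e ε hw
  have hS : ∑ i, ∑ j, ε i * ε j * dd (e i) w q * dd (e j) Ψ q * dd (e i) (dd (e j) w) q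
      = ∑ i, ∑ j, ε i * ε j * dd (e j) w q * dd (e i) Ψ q * dd (e i) (dd (e j) w) q := by
    rw [Finset.sum_comm]
    refine Finset.sum_congr rfl fun i _ => Finset.sum_congr rfl fun j _ => ?_
    rw [dd_symm hw (e j) (e i)]; ring
  have key : ∀ i, dd (e i) (fun q => ε i * (g q * (br e ε w w q * dd (e i) Ψ q))) q
      = (ε i * (dd (e i) g q * dd (e i) Ψ q)) * br e ε w w q
        + g q * br e ε w w q * (ε i * c i)
        + 2 * (g q * (∑ j, ε i * ε j * dd (e j) w q * dd (e i) Ψ q * dd (e i) (dd (e j) w) q)) := by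
    intro i
    have h1 := hΨs.dd (e i)
    rw [dd_cmul _ (hg.mul (hb.mul h1)), dd_mul hg (hb.mul h1), dd_mul hb h1, dd_br e ε hw hw]
    simp only [hΨ, if_true]
    have : ∑ j, ε i * ε j * dd (e j) w q * dd (e i) Ψ q * dd (e i) (dd (e j) w) q
        = ε i * dd (e i) Ψ q * ∑ j, ε j * (dd (e i) (dd (e j) w) q * dd (e j) w q) := by
      rw [Finset.mul_sum]; exact Finset.sum_congr rfl fun j _ => by ring
    rw [this]
    have h2 : ∑ j, ε j * (dd (e i) (dd (e j) w) q * dd (e j) w q + dd (e j) w q * dd (e i) (dd (e j) w) q)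
      = 2 * ∑ j, ε j * (dd (e i) (dd (e j) w) q * dd (e j) w q) := by
      rw [Finset.mul_sum]; exact Finset.sum_congr rfl fun j _ => by ring
    rw [h2]
    ring
  rw [hS]
  simp only [key, Finset.sum_add_distrib, ← Finset.mul_sum, ← Finset.sum_mul]
  rfl

lemma div4 (hΨs : Sm Ψ) (hΨ : ∀ i j q, dd (e j) (dd (e i) Ψ) q = if i = j then c i else 0)
    {h w : V → ℝ} (hh : Sm h) (hw : Sm w) (q : V) :
    ∑ i, dd (e i) (fun q => ε i * (h q * (w q ^ 2 * dd (e i) Ψ q))) q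
      = w q ^ 2 * br e ε h Ψ q + 2 * h q * w q * br e ε w Ψ q
        + h q * w q ^ 2 * (∑ i, ε i * c i) := by
  unfold br
  simp only [Finset.mul_sum, ← Finset.sum_add_distrib]
  refine Finset.sum_congr rfl fun i _ => ?_
  have h1 := hΨs.dd (e i)
  rw [dd_cmul _ (hh.mul ((hw.pow 2).mul h1)), dd_mul hh ((hw.pow 2).mul h1),
    dd_mul (hw.pow 2) h1, dd_sq hw]
  simp only [hΨ, if_true]
  ring

lemma dd_D (hε : ∀ i, ε i ^ 2 = 1) (hΨs : Sm Ψ)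
    (hΨ : ∀ i j q, dd (e j) (dd (e i) Ψ) q = if i = j then c i else 0) (i : ι) (q : V) :
    dd (e i) (br e ε Ψ Ψ) q = 2 * ε i * c i * dd (e i) Ψ q := by
  rw [dd_br e ε hΨs hΨs]
  simp only [hΨ, mul_add, Finset.sum_add_distrib, mul_ite, mul_zero, ite_mul, zero_mul,
    Finset.sum_ite_eq', Finset.mem_univ, if_true]
  ring

theorem core_ident (hε : ∀ i, ε i ^ 2 = 1) (hΨs : Sm Ψ)
    (hΨ : ∀ i j q, dd (e j) (dd (e i) Ψ) q = if i = j then c i else 0)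
    {w : V → ℝ} (hw : Sm w) (s l α : ℝ) :
    ∃ F : ι → V → ℝ, (∀ i, Sm (F i)) ∧
      (∀ K : Set V, IsClosed K → (∀ q ∉ K, w q = 0) → ∀ i, ∀ q ∉ K, F i q = 0) ∧
      ∀ q, ∀ φ D σ R Q H Hw G : ℝ, φ = Real.exp (l * Ψ q) → D = br e ε Ψ Ψ q → σ = ∑ i, ε i * c i →
        R = br e ε w Ψ q → Q = br e ε w w q → H = ∑ i, c i * dd (e i) Ψ q ^ 2 →
        Hw = ∑ i, c i * dd (e i) w q ^ 2 →
        G = φ * ((l ^ 2 * D + l * σ) * ((α - 1) * s * l * σ - s * l ^ 2 * D)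
          - 4 * l * (s * l ^ 2) * H - 2 * (s * l ^ 2) * ∑ i, c i ^ 2) →
        (bx e ε w q + s ^ 2 * l ^ 2 * φ ^ 2 * D * w q) *
          ((α - 1) * s * l * φ * σ * w q - s * l ^ 2 * φ * D * w q - 2 * s * l * φ * R)
        = 2 * s * l ^ 2 * φ * R ^ 2 + s * l * φ * (2 * Hw - α * σ * Q)
          + s ^ 3 * l ^ 3 * φ ^ 3 * w q ^ 2 * (2 * l * D ^ 2 + 2 * H + α * σ * D)
          + 1 / 2 * G * w q ^ 2 + ∑ i, dd (e i) (F i) q := by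
  set S := ∑ i, ε i * c i with hS
  set f : V → ℝ := fun q => Real.exp (l * Ψ q) with hf
  set DD : V → ℝ := br e ε Ψ Ψ with hDD
  have hfs : Sm f := (hΨs.cmul l).exp
  have hDs : Sm DD := hΨs.br e ε hΨs
  set m : V → ℝ := fun q => (α - 1) * s * l * S - s * l ^ 2 * DD q with hm
  have hms : Sm m := (Sm.const _).sub (hDs.cmul _)
  set g : V → ℝ := fun q => f q * m q with hg
  have hgs : Sm g := hfs.mul hms
  set h : V → ℝ := fun q => f q ^ 3 * DD q with hh
  have hhs : Sm h := (hfs.pow 3).mul hDs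
  have dm : ∀ i q, dd (e i) m q = - (s * l ^ 2) * (2 * ε i * c i * dd (e i) Ψ q) := by
    intro i q
    rw [hm, dd_sub (Sm.const _) (hDs.cmul _), dd_cmul _ hDs, hDD, dd_D e ε c hε hΨs hΨ]
    simp [dd]
  have df : ∀ i q, dd (e i) f q = l * (f q * dd (e i) Ψ q) := by
    intro i q
    rw [hf, dd_exp (hΨs.cmul l), dd_cmul _ hΨs]; ring
  have dg : ∀ i, dd (e i) g = fun q => l * (g q * dd (e i) Ψ q)
      + (- (s * l ^ 2) * (2 * ε i * c i)) * (f q * dd (e i) Ψ q) := by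
    intro i; funext q
    rw [hg, dd_mul hfs hms, dm, df]; ring
  have ddg : ∀ i q, dd (e i) (dd (e i) g) q = f q * (l ^ 2 * dd (e i) Ψ q ^ 2 * m q + l * c i * m q
      - 4 * l * (s * l ^ 2) * ε i * c i * dd (e i) Ψ q ^ 2 - 2 * (s * l ^ 2) * ε i * c i ^ 2) := by
    intro i q
    have h1 := hΨs.dd (e i)
    have h2 := dg i
    have h3 := congrFun h2 q
    rw [h2, dd_add ((hgs.mul h1).cmul _) ((hfs.mul h1).cmul _), dd_cmul _ (hgs.mul h1),
      dd_cmul _ (hfs.mul h1), dd_mul hgs h1, dd_mul hfs h1, df, hΨ, h3]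
    simp only [if_true, hg]
    ring
  have hbxg : ∀ q, bx e ε g q = f q * ((l ^ 2 * DD q + l * S) * m q
      - 4 * l * (s * l ^ 2) * (∑ i, c i * dd (e i) Ψ q ^ 2) - 2 * (s * l ^ 2) * ∑ i, c i ^ 2) := by
    intro q
    simp only [bx, hDD, br, hS, Finset.mul_sum, Finset.sum_mul, mul_sub, mul_add, add_mul,
      ← Finset.sum_add_distrib, ← Finset.sum_sub_distrib]
    refine Finset.sum_congr rfl fun i _ => ?_
    rw [ddg]
    linear_combination (-f q * (4 * l * (s * l ^ 2) * c i * dd (e i) Ψ q ^ 2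
      + 2 * (s * l ^ 2) * c i ^ 2)) * hε i
  have hbrf : ∀ (u : V → ℝ) q, br e ε f u q = l * f q * br e ε u Ψ q := by
    intro u q
    simp only [br, Finset.mul_sum]
    refine Finset.sum_congr rfl fun i _ => ?_
    rw [df]; ring
  have hbrh : ∀ q, br e ε h Ψ q = 3 * l * f q ^ 3 * DD q ^ 2
      + 2 * f q ^ 3 * ∑ i, c i * dd (e i) Ψ q ^ 2 := by
    intro q
    have h0 : ∀ i, dd (e i) h q = 3 * l * f q ^ 3 * DD q * dd (e i) Ψ q
        + 2 * f q ^ 3 * (ε i * c i * dd (e i) Ψ q) := by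
      intro i
      rw [hh, dd_mul (hfs.pow 3) hDs, dd_cube hfs, df, hDD, dd_D e ε c hε hΨs hΨ]; ring
    have h1 : 3 * l * f q ^ 3 * DD q ^ 2 = 3 * l * f q ^ 3 * DD q * br e ε Ψ Ψ q := by
      rw [hDD]; ring
    rw [h1]
    simp only [br, Finset.mul_sum, ← Finset.sum_add_distrib]
    refine Finset.sum_congr rfl fun i _ => ?_
    rw [h0]
    linear_combination (2 * f q ^ 3 * c i * dd (e i) Ψ q ^ 2) * hε i
  have hb1 := hw.br e ε hΨs
  have hb2 := hw.br e ε hw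
  let F1 : ι → V → ℝ := fun i q =>
    ε i * (g q * (w q * dd (e i) w q) - 1/2 * (dd (e i) g q * w q ^ 2))
  let F2 : ι → V → ℝ := fun i q => ε i * (f q * (br e ε w Ψ q * dd (e i) w q))
  let F3 : ι → V → ℝ := fun i q => ε i * (f q * (br e ε w w q * dd (e i) Ψ q))
  let F4 : ι → V → ℝ := fun i q => ε i * (h q * (w q ^ 2 * dd (e i) Ψ q))
  have hF1 : ∀ i, Sm (F1 i) := fun i =>
    ((hgs.mul (hw.mul (hw.dd _))).sub (((hgs.dd _).mul (hw.pow 2)).cmul _)).cmul _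
  have hF2 : ∀ i, Sm (F2 i) := fun i => (hfs.mul (hb1.mul (hw.dd _))).cmul _
  have hF3 : ∀ i, Sm (F3 i) := fun i => (hfs.mul (hb2.mul (hΨs.dd _))).cmul _
  have hF4 : ∀ i, Sm (F4 i) := fun i => (hhs.mul ((hw.pow 2).mul (hΨs.dd _))).cmul _
  refine ⟨fun i q => ((F1 i q + (- (2 * s * l)) * F2 i q) + (s * l) * F3 i q)
      + (- (s ^ 3 * l ^ 3)) * F4 i q, ?_, ?_, ?_⟩
  · exact fun i => (((hF1 i).add ((hF2 i).cmul _)).add ((hF3 i).cmul _)).add ((hF4 i).cmul _)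
  · intro K hK h0 i q hq
    have h1 := fun j => dd_zero hK h0 (e j) q hq
    have h2 := h0 q hq
    simp [F1, F2, F3, F4, h1, h2, br]
  · intro q φ D σ R Q H Hw G hφ hD hσ hR hQ hH hHw hG
    have hsum : ∑ i, dd (e i) (fun q => ((F1 i q + (- (2 * s * l)) * F2 i q) + (s * l) * F3 i q)
      + (- (s ^ 3 * l ^ 3)) * F4 i q) q = ∑ i, dd (e i) (F1 i) q
        + (- (2 * s * l)) * ∑ i, dd (e i) (F2 i) q + (s * l) * ∑ i, dd (e i) (F3 i) q
        + (- (s ^ 3 * l ^ 3)) * ∑ i, dd (e i) (F4 i) q := by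
      simp only [Finset.mul_sum, ← Finset.sum_add_distrib]
      refine Finset.sum_congr rfl fun i _ => ?_
      rw [dd_add (((hF1 i).add ((hF2 i).cmul _)).add ((hF3 i).cmul _)) ((hF4 i).cmul _),
        dd_add ((hF1 i).add ((hF2 i).cmul _)) ((hF3 i).cmul _),
        dd_add (hF1 i) ((hF2 i).cmul _), dd_cmul _ (hF2 i), dd_cmul _ (hF3 i), dd_cmul _ (hF4 i)]
    rw [hsum, div1 e ε hgs hw, div2 e ε c hε hΨs hΨ hfs hw, div3 e ε c hΨs hΨ hfs hw,
      div4 e ε c hΨs hΨ hhs hw, hbxg, hbrf, hbrf, hbrh]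
    rw [← hQ, ← hR, ← hH, ← hHw, ← hS, ← hσ, show br e ε Ψ Ψ q = D from hD.symm, hG]
    simp only [hg, hm, hh]
    rw [show f q = φ from hφ.symm, show DD q = D from hD.symm, ← hσ]
    ring
end ident
section bridge
variable {n : ℕ}

local notation "EE" => EuclideanSpace ℝ (Fin n)

lemma bridge_t {u : EE → ℝ → ℝ} (hu : Sm (fun q : EE × ℝ => u q.1 q.2)) (x : EE) (t : ℝ) :
    deriv (u x) t = dd ((0 : EE), (1 : ℝ)) (fun q : EE × ℝ => u q.1 q.2) (x, t) := by
  have h : DifferentiableAt ℝ (fun q : EE × ℝ => u q.1 q.2) (x, t) :=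
    (ContDiff.differentiable hu (by simp)) _
  have h2 : HasDerivAt (fun τ : ℝ => (x, τ)) ((0 : EE), (1 : ℝ)) t :=
    (hasDerivAt_const t x).prodMk (hasDerivAt_id t)
  exact (h.hasFDerivAt.comp_hasDerivAt t h2).deriv

lemma bridge_x {u : EE → ℝ → ℝ} (hu : Sm (fun q : EE × ℝ => u q.1 q.2)) (x : EE) (t : ℝ) (v : EE) :
    fderiv ℝ (fun y => u y t) x v = dd (v, (0 : ℝ)) (fun q : EE × ℝ => u q.1 q.2) (x, t) := by
  have h : DifferentiableAt ℝ (fun q : EE × ℝ => u q.1 q.2) (x, t) :=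
    (ContDiff.differentiable hu (by simp)) _
  have h2 : HasFDerivAt (fun y : EE => (y, t)) (ContinuousLinearMap.inl ℝ EE ℝ) x :=
    hasFDerivAt_prodMk_left x t
  have h3 := (h.hasFDerivAt.comp x h2).fderiv
  have h4 : fderiv ℝ (fun y => u y t) x = _ := h3
  rw [h4]; simp [dd]

lemma bridge_tt {u : EE → ℝ → ℝ} (hu : Sm (fun q : EE × ℝ => u q.1 q.2)) (x : EE) (t : ℝ) :
    deriv (deriv (u x)) t = dd ((0 : EE), (1 : ℝ)) (dd ((0 : EE), (1 : ℝ))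
      (fun q : EE × ℝ => u q.1 q.2)) (x, t) := by
  have h1 : deriv (u x) = (fun y τ => dd ((0 : EE), (1 : ℝ)) (fun q : EE × ℝ => u q.1 q.2) (y, τ)) x := by
    funext τ; exact bridge_t hu x τ
  rw [h1, bridge_t (u := fun y τ => dd ((0 : EE), (1 : ℝ)) (fun q : EE × ℝ => u q.1 q.2) (y, τ))
    (hu.dd _)]

lemma bridge_lap {u : EE → ℝ → ℝ} (hu : Sm (fun q : EE × ℝ => u q.1 q.2)) (x : EE) (t : ℝ) :
    lap (fun y => u y t) x = ∑ i : Fin n, dd ((EuclideanSpace.single i 1 : EE), (0 : ℝ))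
      (dd ((EuclideanSpace.single i 1 : EE), (0 : ℝ)) (fun q : EE × ℝ => u q.1 q.2)) (x, t) := by
  unfold lap
  refine Finset.sum_congr rfl fun i _ => ?_
  have h1 : (fun y => fderiv ℝ (fun y => u y t) y (EuclideanSpace.single i 1)) = fun y =>
      (fun y τ => dd ((EuclideanSpace.single i 1 : EE), (0 : ℝ)) (fun q : EE × ℝ => u q.1 q.2) (y, τ)) y t := by
    funext y; exact bridge_x hu y t _
  rw [h1, bridge_x (u := fun y τ => dd ((EuclideanSpace.single i 1 : EE), (0 : ℝ))
    (fun q : EE × ℝ => u q.1 q.2) (y, τ)) (hu.dd _)]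

lemma grad_coord (f : EE → ℝ) (x : EE) (i : Fin n) :
    gradient f x i = fderiv ℝ f x (EuclideanSpace.single i 1) := by
  rw [← inner_gradient_left, EuclideanSpace.inner_single_right]; simp

lemma bridge_inner {u z : EE → ℝ → ℝ} (hu : Sm (fun q : EE × ℝ => u q.1 q.2))
    (hz : Sm (fun q : EE × ℝ => z q.1 q.2)) (x : EE) (t : ℝ) :
    ⟪gradient (fun y => u y t) x, gradient (fun y => z y t) x⟫ = ∑ i : Fin n,
      dd ((EuclideanSpace.single i 1 : EE), (0 : ℝ)) (fun q : EE × ℝ => u q.1 q.2) (x, t) *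
      dd ((EuclideanSpace.single i 1 : EE), (0 : ℝ)) (fun q : EE × ℝ => z q.1 q.2) (x, t) := by
  rw [PiLp.inner_apply]
  refine Finset.sum_congr rfl fun i _ => ?_
  rw [grad_coord, grad_coord, bridge_x hu, bridge_x hz]
  simp [mul_comm]

lemma bridge_norm {u : EE → ℝ → ℝ} (hu : Sm (fun q : EE × ℝ => u q.1 q.2)) (x : EE) (t : ℝ) :
    ‖gradient (fun y => u y t) x‖ ^ 2 = ∑ i : Fin n,
      dd ((EuclideanSpace.single i 1 : EE), (0 : ℝ)) (fun q : EE × ℝ => u q.1 q.2) (x, t) ^ 2 := by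
  rw [← real_inner_self_eq_norm_sq, bridge_inner hu hu]
  simp only [sq]

/-- coordinate frame of space-time -/
noncomputable def fr (n : ℕ) : Option (Fin n) → EuclideanSpace ℝ (Fin n) × ℝ
  | none => (0, 1)
  | some i => (EuclideanSpace.single i 1, 0)

/-- signature -/
noncomputable def sg (n : ℕ) : Option (Fin n) → ℝ
  | none => 1
  | some _ => -1

/-- Hessian of the weight -/
noncomputable def hsn (n : ℕ) (β : ℝ) : Option (Fin n) → ℝ
  | none => -2 * β
  | some _ => 2

lemma psi_sm (x₀ : EE) (β C₀ : ℝ) : Sm (fun q : EE × ℝ => psi x₀ β C₀ q.1 q.2) := by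
  unfold Sm psi
  have h : ContDiff ℝ (⊤ : ℕ∞) (fun q : EE × ℝ => ‖q.1 - x₀‖ ^ 2) :=
    ContDiff.norm_sq ℝ (contDiff_fst.sub contDiff_const)
  exact (h.sub (contDiff_const.mul (contDiff_snd.pow 2))).add contDiff_const

lemma psi_d (x₀ : EE) (β C₀ : ℝ) (v : EE × ℝ) :
    dd v (fun q : EE × ℝ => psi x₀ β C₀ q.1 q.2) =
      fun q => 2 * ⟪q.1 - x₀, v.1⟫ - 2 * β * q.2 * v.2 := by
  funext q
  apply dd_eq (psi_sm x₀ β C₀)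
  have h1 : HasDerivAt (fun τ : ℝ => q + τ • v) v 0 := by
    simpa using ((hasDerivAt_id (0:ℝ)).smul_const v).const_add q
  have h2 : HasDerivAt (fun τ : ℝ => (q + τ • v).1 - x₀) v.1 0 := by
    simpa using (((hasDerivAt_id (0:ℝ)).smul_const v.1).const_add q.1).sub_const x₀
  have h3 : HasDerivAt (fun τ : ℝ => (q + τ • v).2) v.2 0 := by
    simpa using ((hasDerivAt_id (0:ℝ)).smul_const v.2).const_add q.2
  have := (h2.norm_sq.sub ((h3.fun_pow 2).const_mul β)).add_const C₀
  refine HasDerivAt.congr_deriv this ?_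
  simp; ring

lemma psi_dd (x₀ : EE) (β C₀ : ℝ) (u v q : EE × ℝ) :
    dd v (dd u (fun q : EE × ℝ => psi x₀ β C₀ q.1 q.2)) q =
      2 * ⟪v.1, u.1⟫ - 2 * β * v.2 * u.2 := by
  apply dd_eq ((psi_sm x₀ β C₀).dd u)
  rw [psi_d]
  have h2 : HasDerivAt (fun τ : ℝ => (q + τ • v).1 - x₀) v.1 0 := by
    simpa using (((hasDerivAt_id (0:ℝ)).smul_const v.1).const_add q.1).sub_const x₀
  have h3 : HasDerivAt (fun τ : ℝ => (q + τ • v).2) v.2 0 := by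
    simpa using ((hasDerivAt_id (0:ℝ)).smul_const v.2).const_add q.2
  have h4 := ((h2.inner ℝ (hasDerivAt_const (0:ℝ) u.1)).const_mul 2).sub
    ((h3.const_mul (2 * β)).mul_const u.2)
  refine HasDerivAt.congr_deriv h4 ?_
  simp

lemma psi_hess (x₀ : EE) (β C₀ : ℝ) (i j : Option (Fin n)) (q : EE × ℝ) :
    dd (fr n j) (dd (fr n i) (fun q : EE × ℝ => psi x₀ β C₀ q.1 q.2)) q
      = if i = j then hsn n β i else 0 := by
  rw [psi_dd]
  rcases i with _ | i <;> rcases j with _ | j <;> simp [fr, hsn, EuclideanSpace.inner_single_left]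
  by_cases h : i = j <;> simp [h, eq_comm]

lemma psi_none (x₀ : EE) (β C₀ : ℝ) (x : EE) (t : ℝ) :
    dd (fr n none) (fun q : EE × ℝ => psi x₀ β C₀ q.1 q.2) (x, t) = -2 * β * t := by
  rw [psi_d]; simp [fr]

lemma psi_some (x₀ : EE) (β C₀ : ℝ) (x : EE) (t : ℝ) (i : Fin n) :
    dd (fr n (some i)) (fun q : EE × ℝ => psi x₀ β C₀ q.1 q.2) (x, t) = 2 * (x - x₀) i := by
  rw [psi_d]; simp [fr, EuclideanSpace.inner_single_right]

lemma sum_sq (x : EE) : ∑ i, (x i) ^ 2 = ‖x‖ ^ 2 := by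
  rw [EuclideanSpace.norm_sq_eq]; simp

lemma haar_vol : (volume : Measure (EE × ℝ)).IsAddHaarMeasure := by
  rw [Measure.volume_eq_prod]; infer_instance

lemma J_eq (Ω : Set EE) (T : ℝ) {K : Set (EE × ℝ)} (hK : IsCompact K)
    (hKs : K ⊆ Ω ×ˢ Set.Ioo (-T) T) {f : EE × ℝ → ℝ} (hf : Continuous f) (h : ∀ q ∉ K, f q = 0) :
    ∫ t in Set.Ioo (-T) T, ∫ x in Ω, f (x, t) = ∫ q, f q := by
  have := haar_vol (n := n)
  have hi : Integrable f (volume : Measure (EE × ℝ)) := integrable_of_K _ hK hf h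
  have h1 : ∫ q in Ω ×ˢ Set.Ioo (-T) T, f q = ∫ q, f q :=
    setIntegral_eq_integral_of_forall_compl_eq_zero fun q hq => h q fun hq' => hq (hKs hq')
  rw [← h1, Measure.volume_eq_prod, ← Measure.prod_restrict, integral_prod_symm]
  rw [Measure.prod_restrict, ← Measure.volume_eq_prod]
  exact hi.integrableOn

/-- pointwise lower bound, pure algebra -/
lemma pt_bound {κ M s l φ w R Q H Hw D σ α G a b β N : ℝ} (hs : 0 < s) (hl : 0 < l) (hφ : 0 < φ)
    (hb : 0 ≤ b) (hσ : σ = -2 * (β + N)) (hHw : Hw = -2 * β * a ^ 2 + 2 * b) (hQ : Q = a ^ 2 - b)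
    (k1 : κ ≤ 2 * α * (β + N) - 4 * β) (k2 : κ ≤ 4 - 2 * α * (β + N))
    (k3 : κ ≤ 2 * l * D ^ 2 + 2 * H + α * σ * D) (hG : -(M * s * l ^ 4 * φ) ≤ 1 / 2 * G) :
    κ * (s * l * (φ * (a ^ 2 + b)) + s ^ 3 * l ^ 3 * (φ ^ 3 * w ^ 2)) - M * s * l ^ 4 * (φ * w ^ 2)
      ≤ 2 * s * l ^ 2 * φ * R ^ 2 + s * l * φ * (2 * Hw - α * σ * Q)
          + s ^ 3 * l ^ 3 * φ ^ 3 * w ^ 2 * (2 * l * D ^ 2 + 2 * H + α * σ * D)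
          + 1 / 2 * G * w ^ 2 := by
  have e1 : 0 ≤ 2 * s * l ^ 2 * φ * R ^ 2 := by positivity
  have e2 : κ * (a ^ 2 + b) ≤ 2 * Hw - α * σ * Q := by
    rw [hσ, hHw, hQ]
    nlinarith [mul_le_mul_of_nonneg_right k1 (sq_nonneg a), mul_le_mul_of_nonneg_right k2 hb]
  have e3 := mul_le_mul_of_nonneg_left e2 (show 0 ≤ s * l * φ by positivity)
  have e4 := mul_le_mul_of_nonneg_left k3 (show 0 ≤ s ^ 3 * l ^ 3 * φ ^ 3 * w ^ 2 by positivity)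
  have e5 := mul_le_mul_of_nonneg_right hG (sq_nonneg w)
  linarith

lemma G_bound {s l φ D σ α H c2 D1 H1 G : ℝ} (hs : 0 < s) (hl : 1 ≤ l) (hφ : 0 < φ)
    (hD : |D| ≤ D1) (hH : |H| ≤ H1) (hc : 0 ≤ c2)
    (hG : G = φ * ((l ^ 2 * D + l * σ) * ((α - 1) * s * l * σ - s * l ^ 2 * D)
          - 4 * l * (s * l ^ 2) * H - 2 * (s * l ^ 2) * c2)) :
    -(((D1 + |σ|) * (|α - 1| * |σ| + D1) + 4 * H1 + 2 * c2 + 1) * s * l ^ 4 * φ) ≤ 1 / 2 * G := by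
  have hl0 : 0 < l := by linarith
  have hD1 : 0 ≤ D1 := (abs_nonneg _).trans hD
  have hH1 : 0 ≤ H1 := (abs_nonneg _).trans hH
  have l12 : l ≤ l ^ 2 := by nlinarith
  have l34 : l ^ 3 ≤ l ^ 4 := pow_le_pow_right₀ hl (by norm_num)
  have l24 : l ^ 2 ≤ l ^ 4 := pow_le_pow_right₀ hl (by norm_num)
  have a1 : |l ^ 2 * D + l * σ| ≤ l ^ 2 * (D1 + |σ|) := by
    refine (abs_add_le _ _).trans ?_
    rw [abs_mul, abs_mul, abs_of_pos hl0, abs_of_pos (show 0 < l ^ 2 by positivity)]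
    nlinarith [mul_le_mul_of_nonneg_left hD (show 0 ≤ l ^ 2 by positivity),
      mul_le_mul_of_nonneg_right l12 (abs_nonneg σ)]
  have a2 : |(α - 1) * l * σ - l ^ 2 * D| ≤ l ^ 2 * (|α - 1| * |σ| + D1) := by
    refine (abs_sub _ _).trans ?_
    rw [abs_mul, abs_mul, abs_mul, abs_of_pos hl0, abs_of_pos (show 0 < l ^ 2 by positivity)]
    nlinarith [mul_le_mul_of_nonneg_left hD (show 0 ≤ l ^ 2 by positivity),
      mul_le_mul_of_nonneg_right l12 (mul_nonneg (abs_nonneg (α - 1)) (abs_nonneg σ))]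
  have a3 : |(l ^ 2 * D + l * σ) * ((α - 1) * l * σ - l ^ 2 * D)|
      ≤ l ^ 4 * ((D1 + |σ|) * (|α - 1| * |σ| + D1)) := by
    rw [abs_mul]
    refine (mul_le_mul a1 a2 (abs_nonneg _) (by positivity)).trans (le_of_eq (by ring))
  have a4 := (abs_le.1 a3).1
  have a5 : l ^ 3 * H ≤ l ^ 4 * H1 :=
    by
      calc l ^ 3 * H ≤ l ^ 3 * H1 :=
            mul_le_mul_of_nonneg_left ((le_abs_self H).trans hH) (by positivity)
        _ ≤ l ^ 4 * H1 := mul_le_mul_of_nonneg_right l34 hH1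
  have a6 : l ^ 2 * c2 ≤ l ^ 4 * c2 := mul_le_mul_of_nonneg_right l24 hc
  have key : -(2 * ((D1 + |σ|) * (|α - 1| * |σ| + D1) + 4 * H1 + 2 * c2 + 1) * l ^ 4) ≤
      (l ^ 2 * D + l * σ) * ((α - 1) * l * σ - l ^ 2 * D) - 4 * (l ^ 3 * H) - 2 * (l ^ 2 * c2) := by
    have p1 : 0 ≤ l ^ 4 * ((D1 + |σ|) * (|α - 1| * |σ| + D1)) := by positivity
    have p2 : 0 ≤ l ^ 4 * H1 := by positivity
    have p3 : 0 ≤ l ^ 4 * c2 := by positivity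
    have p4 : 0 ≤ l ^ 4 := by positivity
    linarith
  have := mul_le_mul_of_nonneg_left key (show 0 ≤ s * φ by positivity)
  rw [hG]
  linarith

end bridge
set_option maxHeartbeats 1000000

/-- **Lower bound for the cross term** `∫∫ P₁w P₂w` (Steps 1–2 of the proof of Theorem 2.1),
for smooth `w` compactly supported in `Ω × (-T,T)`. -/
theorem cross_term_lower_bound
    (n : ℕ) (hn : 1 ≤ n)
    (Ω : Set (EuclideanSpace ℝ (Fin n))) (hΩo : IsOpen Ω) (hΩb : Bornology.IsBounded Ω)
    (T : ℝ) (hT : 0 < T)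
    (x₀ : EuclideanSpace ℝ (Fin n)) (hx₀ : x₀ ∉ closure Ω)
    (β : ℝ) (hβ : β ∈ Set.Ioo (0:ℝ) 1) (C₀ : ℝ) (hC₀ : 0 < C₀)
    (hψ : ∀ x ∈ Ω, ∀ t ∈ Set.Ioo (-T) T, 1 ≤ psi x₀ β C₀ x t)
    (α : ℝ) (hα₁ : 2 * β / (β + n) < α) (hα₂ : α < 2 / (β + n)) :
    ∃ l₀ > (0:ℝ), ∃ κ > (0:ℝ), ∃ M > (0:ℝ), ∀ l ≥ l₀, ∀ s > (0:ℝ),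
      ∀ w : EuclideanSpace ℝ (Fin n) → ℝ → ℝ,
        ContDiff ℝ (⊤ : ℕ∞) (fun q : EuclideanSpace ℝ (Fin n) × ℝ => w q.1 q.2) →
        (∃ K : Set (EuclideanSpace ℝ (Fin n) × ℝ), IsCompact K ∧ K ⊆ Ω ×ˢ Set.Ioo (-T) T ∧
          ∀ x t, (x, t) ∉ K → w x t = 0) →
        κ * (s * l * (∫ t in Set.Ioo (-T) T, ∫ x in Ω,
                phi x₀ β C₀ l x t *
                  ((deriv (w x) t) ^ 2 + ‖gradient (fun y => w y t) x‖ ^ 2))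
              + s ^ 3 * l ^ 3 * (∫ t in Set.Ioo (-T) T, ∫ x in Ω,
                (phi x₀ β C₀ l x t) ^ 3 * (w x t) ^ 2))
            - M * s * l ^ 4 * (∫ t in Set.Ioo (-T) T, ∫ x in Ω,
                phi x₀ β C₀ l x t * (w x t) ^ 2)
          ≤ ∫ t in Set.Ioo (-T) T, ∫ x in Ω,
              P1 x₀ β C₀ s l w x t * P2 x₀ β C₀ s l α w x t := by
  classical
  obtain ⟨hβ0, hβ1⟩ := hβ
  have hn' : (1:ℝ) ≤ n := by exact_mod_cast hn
  have hbn : 0 < β + n := by linarith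
  have := haar_vol (n := n)
  -- lower bound for the distance to `x₀`
  obtain ⟨d, hd, hdΩ⟩ : ∃ d > 0, ∀ x ∈ Ω, d ≤ ‖x - x₀‖ := by
    have h1 : (closure Ω)ᶜ ∈ nhds x₀ := isClosed_closure.isOpen_compl.mem_nhds hx₀
    obtain ⟨d, hd, hb⟩ := Metric.mem_nhds_iff.1 h1
    refine ⟨d, hd, fun x hx => ?_⟩
    by_contra hlt
    push Not at hlt
    exact hb (show x ∈ Metric.ball x₀ d by rwa [mem_ball_iff_norm]) (subset_closure hx)
  obtain ⟨r, hr⟩ : ∃ r, ∀ x ∈ Ω, ‖x - x₀‖ ≤ r := by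
    obtain ⟨r, hr⟩ := hΩb.subset_closedBall x₀
    exact ⟨r, fun x hx => mem_closedBall_iff_norm.1 (hr hx)⟩
  have q1 : 0 < 2 * α * (β + n) - 4 * β := by
    rw [div_lt_iff₀ hbn] at hα₁; linarith
  have q2 : 0 < 4 - 2 * α * (β + n) := by
    rw [lt_div_iff₀ hbn] at hα₂; linarith
  have q3 : 0 < 8 * (1 - β) * d ^ 2 := by
    have : 0 < 1 - β := by linarith
    positivity
  set σ : ℝ := -2 * (β + n) with hσ
  set cc : ℝ := 2 * α * (β + n) + 4 * β with hcc
  set D1 : ℝ := 4 * T ^ 2 + 4 * r ^ 2 with hD1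
  set H1 : ℝ := 8 * T ^ 2 + 8 * r ^ 2 with hH1
  set c2 : ℝ := 4 * β ^ 2 + 4 * n with hc2
  have hc2n : 0 ≤ c2 := by positivity
  have hD1n : 0 ≤ D1 := by positivity
  have hH1n : 0 ≤ H1 := by positivity
  set κ : ℝ := min (min (2 * α * (β + n) - 4 * β) (4 - 2 * α * (β + n))) (8 * (1 - β) * d ^ 2) with hκ
  have k1 : κ ≤ 2 * α * (β + n) - 4 * β := (min_le_left _ _).trans (min_le_left _ _)
  have k2 : κ ≤ 4 - 2 * α * (β + n) := (min_le_left _ _).trans (min_le_right _ _)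
  have k3 : κ ≤ 8 * (1 - β) * d ^ 2 := min_le_right _ _
  set M : ℝ := (D1 + |σ|) * (|α - 1| * |σ| + D1) + 4 * H1 + 2 * c2 + 1 with hM
  refine ⟨max 1 (cc ^ 2 / (8 * (8 * (1 - β) * d ^ 2))), lt_max_of_lt_left one_pos, κ,
    lt_min (lt_min q1 q2) q3, M, by positivity, ?_⟩
  intro l hl s hs w hw ⟨K, hK, hKs, hwK⟩
  have hl1 : 1 ≤ l := (le_max_left _ _).trans hl
  have hl0 : 0 < l := by linarith
  have hlc : cc ^ 2 ≤ l * (8 * (8 * (1 - β) * d ^ 2)) := by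
    have := (le_max_right _ _).trans hl
    rwa [div_le_iff₀ (by positivity)] at this
  set W : EuclideanSpace ℝ (Fin n) × ℝ → ℝ := fun q => w q.1 q.2 with hW
  set Ψ : EuclideanSpace ℝ (Fin n) × ℝ → ℝ := fun q => psi x₀ β C₀ q.1 q.2 with hΨ
  set f : EuclideanSpace ℝ (Fin n) × ℝ → ℝ := fun q => Real.exp (l * Ψ q) with hf
  have hWs : Sm W := hw
  have hΨs : Sm Ψ := psi_sm x₀ β C₀
  have hfs : Sm f := (hΨs.cmul l).exp
  have hW0 : ∀ q ∉ K, W q = 0 := fun q hq => hwK q.1 q.2 hq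
  have hdW0 : ∀ v, ∀ q ∉ K, dd v W q = 0 := fun v => dd_zero hK.isClosed hW0 v
  have hddW0 : ∀ u v, ∀ q ∉ K, dd u (dd v W) q = 0 := fun u v => dd_zero hK.isClosed (hdW0 v) u
  have hε : ∀ i, sg n i ^ 2 = 1 := by
    intro i; rcases i with _ | i <;> simp [sg]
  have hσs : ∑ i, sg n i * hsn n β i = σ := by
    rw [Fintype.sum_option]; simp [sg, hsn, hσ]; ring
  have hc2s : ∑ i, hsn n β i ^ 2 = c2 := by
    rw [Fintype.sum_option]; simp [hsn, hc2]; ring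
  obtain ⟨F, hFs, hF0, hFid⟩ := core_ident (fr n) (sg n) (hsn n β) hε hΨs (psi_hess x₀ β C₀) hWs s l α
  -- the four integrands
  have hA : ∀ x t, phi x₀ β C₀ l x t * ((deriv (w x) t) ^ 2 + ‖gradient (fun y => w y t) x‖ ^ 2)
      = (fun q => f q * (dd (fr n none) W q ^ 2 + ∑ i, dd (fr n (some i)) W q ^ 2)) (x, t) := by
    intro x t
    rw [bridge_t hWs, bridge_norm hWs]; rfl
  have hX : ∀ x t, P1 x₀ β C₀ s l w x t * P2 x₀ β C₀ s l α w x t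
      = (fun q => (bx (fr n) (sg n) W q + s ^ 2 * l ^ 2 * f q ^ 2 * br (fr n) (sg n) Ψ Ψ q * W q) *
          ((α - 1) * s * l * f q * σ * W q - s * l ^ 2 * f q * br (fr n) (sg n) Ψ Ψ q * W q
            - 2 * s * l * f q * br (fr n) (sg n) W Ψ q)) (x, t) := by
    intro x t
    have g1 : deriv (deriv (w x)) t - lap (fun y => w y t) x = bx (fr n) (sg n) W (x, t) := by
      rw [bridge_tt hWs, bridge_lap hWs, bx, Fintype.sum_option]
      simp [fr, sg, sub_eq_add_neg, hW]
    have g2 : deriv (deriv (psi x₀ β C₀ x)) t - lap (fun y => psi x₀ β C₀ y t) x = σ := by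
      rw [bridge_tt hΨs, bridge_lap hΨs, ← hσs, Fintype.sum_option]
      have e1 := psi_hess x₀ β C₀ none none (x, t)
      have e2 := fun i => psi_hess x₀ β C₀ (some i) (some i) (x, t)
      simp only [fr, if_true] at e1 e2
      rw [e1]; simp only [e2]
      simp [sg, hsn, sub_eq_add_neg]
    have g3 : (deriv (psi x₀ β C₀ x) t) ^ 2 - ‖gradient (fun y => psi x₀ β C₀ y t) x‖ ^ 2
        = br (fr n) (sg n) Ψ Ψ (x, t) := by
      rw [bridge_t hΨs, bridge_norm hΨs, br, Fintype.sum_option]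
      simp [fr, sg, sub_eq_add_neg, hΨ, sq]
    have g4 : deriv (w x) t * deriv (psi x₀ β C₀ x) t
        - ⟪gradient (fun y => w y t) x, gradient (fun y => psi x₀ β C₀ y t) x⟫
        = br (fr n) (sg n) W Ψ (x, t) := by
      rw [bridge_t hΨs, bridge_t hWs, bridge_inner hWs hΨs, br, Fintype.sum_option]
      simp [fr, sg, sub_eq_add_neg, hΨ, hW]
    unfold P1 P2
    rw [g1, g2, g3, g4]
    rfl
  simp only [hA, hX]
  have hB : ∀ x t, (phi x₀ β C₀ l x t) ^ 3 * (w x t) ^ 2 = (fun q => f q ^ 3 * W q ^ 2) (x, t) :=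
    fun x t => rfl
  have hC : ∀ x t, phi x₀ β C₀ l x t * (w x t) ^ 2 = (fun q => f q * W q ^ 2) (x, t) :=
    fun x t => rfl
  simp only [hB, hC]
  set A : EuclideanSpace ℝ (Fin n) × ℝ → ℝ :=
    fun q => f q * (dd (fr n none) W q ^ 2 + ∑ i, dd (fr n (some i)) W q ^ 2) with hAd
  set B : EuclideanSpace ℝ (Fin n) × ℝ → ℝ := fun q => f q ^ 3 * W q ^ 2 with hBd
  set C : EuclideanSpace ℝ (Fin n) × ℝ → ℝ := fun q => f q * W q ^ 2 with hCd
  set X : EuclideanSpace ℝ (Fin n) × ℝ → ℝ :=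
    fun q => (bx (fr n) (sg n) W q + s ^ 2 * l ^ 2 * f q ^ 2 * br (fr n) (sg n) Ψ Ψ q * W q) *
          ((α - 1) * s * l * f q * σ * W q - s * l ^ 2 * f q * br (fr n) (sg n) Ψ Ψ q * W q
            - 2 * s * l * f q * br (fr n) (sg n) W Ψ q) with hXd
  have cA : Continuous A := (hfs.mul (((hWs.dd _).pow 2).add
    (Sm.sum fun i => (hWs.dd (fr n (some i))).pow 2))).continuous
  have cB : Continuous B := ((hfs.pow 3).mul (hWs.pow 2)).continuous
  have cC : Continuous C := (hfs.mul (hWs.pow 2)).continuous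
  have cX : Continuous X := by
    have c1 := (hWs.bx (fr n) (sg n)).continuous
    have c2 := (hΨs.br (fr n) (sg n) hΨs).continuous
    have c3 := (hWs.br (fr n) (sg n) hΨs).continuous
    have c4 := hfs.continuous
    have c5 := hWs.continuous
    rw [hXd]
    fun_prop
  have zA : ∀ q ∉ K, A q = 0 := fun q hq => by simp [hAd, hdW0 _ q hq]
  have zB : ∀ q ∉ K, B q = 0 := fun q hq => by simp [hBd, hW0 q hq]
  have zC : ∀ q ∉ K, C q = 0 := fun q hq => by simp [hCd, hW0 q hq]
  have zX : ∀ q ∉ K, X q = 0 := fun q hq => by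
    simp [hXd, hW0 q hq, bx, br, hdW0 _ q hq]
  rw [J_eq Ω T hK hKs cA zA, J_eq Ω T hK hKs cB zB, J_eq Ω T hK hKs cC zC,
    J_eq Ω T hK hKs cX zX]
  have iA := integrable_of_K volume hK cA zA
  have iB := integrable_of_K volume hK cB zB
  have iC := integrable_of_K volume hK cC zC
  have iX := integrable_of_K volume hK cX zX
  have zF := hF0 K hK.isClosed hW0
  have iF : Integrable (fun q => ∑ i, dd (fr n i) (F i) q) volume :=
    integrable_of_K volume hK (Sm.sum fun i => (hFs i).dd _).continuous
      (fun q hq => Finset.sum_eq_zero fun i _ => dd_zero hK.isClosed (zF i) _ q hq)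
  have hdiv := integral_div volume (fr n) hK hFs zF
  -- pointwise bound
  have hpt : ∀ q, κ * (s * l * A q + s ^ 3 * l ^ 3 * B q) - M * s * l ^ 4 * C q
      ≤ X q - ∑ i, dd (fr n i) (F i) q := by
    intro q
    by_cases hq : q ∈ K
    swap
    · rw [zA q hq, zB q hq, zC q hq, zX q hq,
        Finset.sum_eq_zero fun i _ => dd_zero hK.isClosed (zF i) _ q hq]
      simp
    obtain ⟨x, t⟩ := q
    obtain ⟨hx, ht⟩ := hKs hq
    simp only at hx ht
    have hN1 := hdΩ x hx
    have hN2 := hr x hx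
    set N := ‖x - x₀‖ with hN
    have hN0 : 0 ≤ N := norm_nonneg _
    have hdN : d ^ 2 ≤ N ^ 2 := by gcongr
    have hNr : N ^ 2 ≤ r ^ 2 := by gcongr
    have htT : t ^ 2 ≤ T ^ 2 := sq_le_sq' ht.1.le ht.2.le
    have ht0 := sq_nonneg t
    have hNN := sq_nonneg N
    have hsumN : ∑ i, (2 * (x - x₀) i) ^ 2 = 4 * N ^ 2 := by
      rw [hN, ← sum_sq, Finset.mul_sum]
      exact Finset.sum_congr rfl fun i _ => by ring
    have hDval : br (fr n) (sg n) Ψ Ψ (x, t) = 4 * β ^ 2 * t ^ 2 - 4 * N ^ 2 := by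
      rw [br, Fintype.sum_option, ← hsumN]
      simp only [hΨ, psi_none, psi_some, sg]
      rw [← Finset.mul_sum]
      simp only [← sq]
      ring
    have hHval : ∑ i, hsn n β i * dd (fr n i) Ψ (x, t) ^ 2 = -8 * β ^ 3 * t ^ 2 + 8 * N ^ 2 := by
      rw [Fintype.sum_option]
      simp only [hΨ, psi_none, psi_some, hsn]
      rw [← Finset.mul_sum, hsumN]
      ring
    have hQval : br (fr n) (sg n) W W (x, t)
        = dd (fr n none) W (x, t) ^ 2 - ∑ i, dd (fr n (some i)) W (x, t) ^ 2 := by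
      rw [br, Fintype.sum_option]
      simp [sg, sq, sub_eq_add_neg]
    have hHwval : ∑ i, hsn n β i * dd (fr n i) W (x, t) ^ 2
        = -2 * β * dd (fr n none) W (x, t) ^ 2 + 2 * ∑ i, dd (fr n (some i)) W (x, t) ^ 2 := by
      rw [Fintype.sum_option, Finset.mul_sum]
      simp [hsn]
    have hid := hFid (x, t) (f (x, t)) _ σ _ _ _ _ _ rfl rfl hσs.symm rfl rfl rfl rfl rfl
    rw [hc2s] at hid
    have hXi : X (x, t) = _ := hid
    rw [hXi, add_sub_cancel_right]
    have hb2 : β ^ 2 ≤ 1 := pow_le_one₀ hβ0.le hβ1.le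
    have hb3 : β ^ 3 ≤ 1 := pow_le_one₀ hβ0.le hβ1.le
    have hbt2 : β ^ 2 * t ^ 2 ≤ T ^ 2 :=
      (mul_le_of_le_one_left ht0 hb2).trans htT
    have hbt3 : β ^ 3 * t ^ 2 ≤ T ^ 2 :=
      (mul_le_of_le_one_left ht0 hb3).trans htT
    have hbt2' : 0 ≤ β ^ 2 * t ^ 2 := by positivity
    have hbt3' : 0 ≤ β ^ 3 * t ^ 2 := by positivity
    refine pt_bound hs hl0 (Real.exp_pos _) (Finset.sum_nonneg fun i _ => sq_nonneg _) hσ hHwval hQval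
      k1 k2 ?_ (G_bound hs hl1 (Real.exp_pos _) ?_ ?_ hc2n rfl)
    · have hsplit : 2 * (∑ i, hsn n β i * dd (fr n i) Ψ (x, t) ^ 2)
          + α * σ * br (fr n) (sg n) Ψ Ψ (x, t)
          = 16 * (1 - β) * N ^ 2 - cc * br (fr n) (sg n) Ψ Ψ (x, t) := by
        rw [hHval, hDval, hσ, hcc]; ring
      generalize br (fr n) (sg n) Ψ Ψ (x, t) = D at *
      rw [add_assoc, hsplit]
      have h1 : 16 * (1 - β) * d ^ 2 ≤ 16 * (1 - β) * N ^ 2 :=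
        mul_le_mul_of_nonneg_left hdN (by linarith)
      have h2 : 0 ≤ 2 * l * D ^ 2 - cc * D + 8 * (1 - β) * d ^ 2 := by
        have h3 : 0 ≤ 8 * l * (2 * l * D ^ 2 - cc * D + 8 * (1 - β) * d ^ 2) := by
          have h4 := sq_nonneg (4 * l * D - cc)
          have h5 : (4 * l * D - cc) ^ 2 = 8 * l * (2 * l * D ^ 2 - cc * D) + cc ^ 2 := by ring
          rw [mul_add]
          linarith only [h4, h5, hlc]
        exact nonneg_of_mul_nonneg_right h3 (by positivity)
      linarith only [h1, h2, k3]
    · rw [hDval, abs_le]; constructor <;> linarith only [hbt2, hbt2', hNr, hNN, hD1, sq_nonneg r, sq_nonneg T]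
    · rw [hHval, abs_le]; constructor <;> linarith only [hbt3, hbt3', hNr, hNN, hH1, sq_nonneg r, sq_nonneg T]
  have j1 : Integrable (fun q => s * l * A q + s ^ 3 * l ^ 3 * B q) volume :=
    (iA.const_mul (s * l)).add (iB.const_mul (s ^ 3 * l ^ 3))
  have j2 : Integrable (fun q => κ * (s * l * A q + s ^ 3 * l ^ 3 * B q)) volume := j1.const_mul κ
  have hmono : ∫ q, (κ * (s * l * A q + s ^ 3 * l ^ 3 * B q) - M * s * l ^ 4 * C q)
      ≤ ∫ q, (X q - ∑ i, dd (fr n i) (F i) q) :=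
    integral_mono (j2.sub (iC.const_mul (M * s * l ^ 4))) (iX.sub iF) hpt
  rw [integral_sub j2 (iC.const_mul (M * s * l ^ 4)), integral_sub iX iF, hdiv,
    integral_const_mul, integral_const_mul,
    integral_add (iA.const_mul (s * l)) (iB.const_mul (s ^ 3 * l ^ 3)), integral_const_mul,
    integral_const_mul, sub_zero] at hmono
  exact hmono
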